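/- Let (R, 𝔪) be a commutative Artinian local ring and let 𝒜 be an R-linear abelian category such that the full subcategory 𝒜_𝔪 of objects annihilated by 𝔪 is almost hereditary in 𝒜. Let σ = (Z, P) be a stability condition on D^b(𝒜). If an object E of D^b(𝒜) is σ-stable, then E is indecomposable (E is not isomorphic to a biproduct of two nonzero objects) and there exist an object A of 𝒜_𝔪 and an integer m such that E ≅ A[m] in D^b(𝒜). -/

import Mathlib

open CategoryTheory Limits Pretriangulated DerivedCategory

universe w v u

section StabilityDefs

variable {D : Type*} [Category D] [HasZeroObject D] [Preadditive D] [HasShift D ℤ]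
  [∀ n : ℤ, (CategoryTheory.shiftFunctor D n).Additive] [Pretriangulated D]

/-- An object `E` has a Harder–Narasimhan filtration with respect to the slicing `P`:
a finite sequence `0 = X₀ → X₁ → ⋯ → Xₙ ≅ E` such that the cone of each
`X_{i-1} → X_i` is a nonzero object of `P(φ_i)`, with `φ₁ > φ₂ > ⋯ > φₙ`. -/
def HasHNFiltration (P : ℝ → Set D) (E : D) : Prop :=
  ∃ (n : ℕ) (X : Fin (n + 1) → D) (f : ∀ i : Fin n, X i.castSucc ⟶ X i.succ)
    (φ : Fin n → ℝ), IsZero (X 0) ∧ Nonempty (X (Fin.last n) ≅ E) ∧ StrictAnti φ ∧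
    ∀ i : Fin n, ∃ (A : D) (g : X i.succ ⟶ A) (h : A ⟶ (X i.castSucc)⟦(1 : ℤ)⟧),
      (Triangle.mk (f i) g h ∈ distTriang D) ∧ ¬ IsZero A ∧ A ∈ P (φ i)

/-- A (Bridgeland) stability condition on the full triangulated subcategory of `D`
determined by the collection of objects `B`. It consists of a central charge `Z`,
additive on distinguished triangles of the subcategory, and of strictly full additive
subcategories `P φ ⊆ B` for `φ ∈ ℝ` satisfying the axioms (s1)–(s4). -/
structure StabilityConditionOn (B : Set D) where
  /-- the central charge -/
  Z : D → ℂ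
  /-- the slicing -/
  P : ℝ → Set D
  P_le : ∀ φ : ℝ, P φ ⊆ B
  -- each `P φ` is a strictly full additive subcategory
  P_iso : ∀ (φ : ℝ) (X Y : D), X ∈ P φ → Nonempty (X ≅ Y) → Y ∈ P φ
  P_zero : ∀ (φ : ℝ) (X : D), IsZero X → X ∈ P φ
  P_biprod : ∀ (φ : ℝ) (X Y : D) (b : BinaryBicone X Y), b.IsBilimit →
    X ∈ P φ → Y ∈ P φ → b.pt ∈ P φ
  -- `Z` is additive on distinguished triangles of the subcategory
  Z_add : ∀ T ∈ distTriang D, T.obj₁ ∈ B → Triangle.obj₂ T ∈ B → T.obj₃ ∈ B →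
    Z (Triangle.obj₂ T) = Z T.obj₁ + Z T.obj₃
  s1 : ∀ (φ : ℝ) (E : D), E ∈ P φ → ¬ IsZero E →
    ∃ m : ℝ, 0 < m ∧ Z E = (m : ℂ) * Complex.exp ((Real.pi : ℂ) * Complex.I * (φ : ℂ))
  s2 : ∀ (φ ψ : ℝ), ψ < φ → ∀ E ∈ P φ, ∀ F ∈ P ψ, ∀ f : E ⟶ F, f = 0
  s3 : ∀ (φ : ℝ) (X : D), X ∈ P (φ + 1) ↔ ∃ Y ∈ P φ, Nonempty (X ≅ Y⟦(1 : ℤ)⟧)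
  s4 : ∀ E ∈ B, ¬ IsZero E → HasHNFiltration P E

variable {B : Set D}

/-- An object is `σ`-semistable of phase `φ` if it is a nonzero object of `P φ`. -/
def StabilityConditionOn.IsSemistable (σ : StabilityConditionOn B) (φ : ℝ) (E : D) : Prop :=
  E ∈ σ.P φ ∧ ¬ IsZero E

/-- An object is `σ`-stable if it is `σ`-semistable of some phase `φ` and is simple in
`P φ`: in any distinguished triangle `A ⟶ E ⟶ C ⟶ A[1]` with `A, C ∈ P φ`, either `A`
or `C` is zero. -/
def StabilityConditionOn.IsStable (σ : StabilityConditionOn B) (φ : ℝ) (E : D) : Prop :=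
  σ.IsSemistable φ E ∧
  ∀ (A C : D) (f : A ⟶ E) (g : E ⟶ C) (h : C ⟶ A⟦(1 : ℤ)⟧),
    (Triangle.mk f g h ∈ distTriang D) → A ∈ σ.P φ → C ∈ σ.P φ → IsZero A ∨ IsZero C

/-- `σ` has the Jordan–Hölder property: every `σ`-semistable object of phase `φ` has a
finite filtration whose successive cones are `σ`-stable of phase `φ`. -/
def StabilityConditionOn.HasJHProperty (σ : StabilityConditionOn B) : Prop :=
  ∀ (φ : ℝ) (E : D), E ∈ σ.P φ → ¬ IsZero E →
    ∃ (n : ℕ) (X : Fin (n + 1) → D) (f : ∀ i : Fin n, X i.castSucc ⟶ X i.succ),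
      IsZero (X 0) ∧ Nonempty (X (Fin.last n) ≅ E) ∧
      ∀ i : Fin n, ∃ (A : D) (g : X i.succ ⟶ A) (h : A ⟶ (X i.castSucc)⟦(1 : ℤ)⟧),
        (Triangle.mk (f i) g h ∈ distTriang D) ∧ σ.IsStable φ A

end StabilityDefs

noncomputable section

variable (𝒜 : Type u) [Category.{v} 𝒜] [Abelian 𝒜] [HasDerivedCategory.{w} 𝒜]

/-- The object of the derived category associated with an object of the abelian
category, placed in degree `0`. -/
abbrev degZero (A : 𝒜) : DerivedCategory 𝒜 := (DerivedCategory.singleFunctor 𝒜 0).obj A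

/-- An object of the derived category is bounded (i.e. belongs to `D^b(𝒜)`) if only
finitely many of its cohomology objects are nonzero. -/
def IsBoundedComplex (E : DerivedCategory 𝒜) : Prop :=
  ∃ a b : ℤ, ∀ i : ℤ, (i < a ∨ b < i) →
    IsZero ((DerivedCategory.homologyFunctor 𝒜 i).obj E)

/-- `A₀` is almost hereditary in `𝒜`: for objects `E`, `F` of `A₀`, the vanishing of
`Hom^0(E,F)` and `Hom^1(E,F)` (computed in the derived category) implies the vanishing
of `Hom^p(E,F)` for all `p ∈ ℤ`. -/
def AlmostHereditary (A₀ : Set 𝒜) : Prop :=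
  ∀ (A B : 𝒜), A ∈ A₀ → B ∈ A₀ →
    (∀ f : degZero 𝒜 A ⟶ degZero 𝒜 B, f = 0) →
    (∀ f : degZero 𝒜 A ⟶ (degZero 𝒜 B)⟦(1 : ℤ)⟧, f = 0) →
    ∀ (p : ℤ) (f : degZero 𝒜 A ⟶ (degZero 𝒜 B)⟦p⟧), f = 0

end

/-
The category `P(φ)` is abelian, so Schur's lemma applies: the image of an endomorphism `f` of the
stable object `E` is zero or all of `E`, and in the second case the cone of `f` is a semistable
object with vanishing central charge, hence zero. Thus `f` is zero or invertible. It follows that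
`E` is indecomposable, that a nilpotent scalar kills `E`, and so that every cohomology object
`X_j = H^j(E)[-j]` is a shift of an object of `𝒜_𝔪`.

It remains to see that `E` has a single cohomology object. By descending induction on `j - i`,
for `i ≤ j` all `Hom^n(τ^{≥j} E, τ^{<i} E)` vanish. In the induction step, a nonzero element of
`Hom^n(X_j, X_i)` with `i < j` and `n ≤ i - j + 1` would induce a nonzero morphism
`E → τ^{≥j} E → τ^{≤i} E[n] → E[n]`, where `n ≤ 0`. For `n < 0` there is none, as `E` is
semistable, and for `n = 0` it is an endomorphism of square zero, hence zero. The almost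
hereditary hypothesis then yields `Hom^n(X_j, X_i) = 0` for all `n`, and the two truncation
triangles extend the vanishing. For `i = j` the truncation triangle of `E` splits, and since `E`
is indecomposable, `E = τ^{≥j} E` or `E = τ^{<j} E` for every `j`.
-/

section EndDichotomy

variable {C : Type*} [Category C] [Preadditive C]

/-- Every endomorphism of `E` is zero or invertible, the conclusion of Schur's lemma. -/
def EndDichotomy (E : C) : Prop := ∀ f : E ⟶ E, f = 0 ∨ IsIso f

namespace EndDichotomy

variable {E : C}

lemma eq_zero_of_isNilpotent (hE : EndDichotomy E) {f : End E} (hf : IsNilpotent f) : f = 0 := by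
  nontriviality End E
  exact (hE f).resolve_right fun hf_iso ↦ hf.not_isUnit ((isUnit_iff_isIso f).2 hf_iso)

lemma eq_zero_of_comp_self (hE : EndDichotomy E) {f : E ⟶ E} (hf : f ≫ f = 0) : f = 0 :=
  hE.eq_zero_of_isNilpotent ⟨2, (pow_two (M := End E) f).trans hf⟩

lemma smul_id_eq_zero {R : Type*} [CommSemiring R] [Linear R C] (hE : EndDichotomy E) {a : R}
    (ha : IsNilpotent a) : a • 𝟙 E = 0 := by
  have hnil := ha.map (algebraMap R (End E))
  rw [Algebra.algebraMap_eq_smul_one] at hnil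
  exact hE.eq_zero_of_isNilpotent hnil

lemma isZero_or_isZero (hE : EndDichotomy E) {X Y : C} (b : BinaryBicone X Y) (e : E ≅ b.pt) :
    IsZero X ∨ IsZero Y := by
  obtain h | _ := hE (e.hom ≫ b.fst ≫ b.inl ≫ e.inv)
  · left
    rw [IsZero.iff_id_eq_zero]
    simpa using b.inl ≫= e.inv ≫= h =≫ (e.hom ≫ b.fst)
  · right
    have hinr : b.inr ≫ e.inv = 0 := by
      rw [← cancel_mono (e.hom ≫ b.fst ≫ b.inl ≫ e.inv)]
      simp
    rw [IsZero.iff_id_eq_zero]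
    simpa using hinr =≫ (e.hom ≫ b.snd)

lemma isIso_or_isZero (hE : EndDichotomy E) {X : C} {s : X ⟶ E} {r : E ⟶ X} (hsr : s ≫ r = 𝟙 X) :
    IsIso r ∨ IsZero X := by
  obtain h | _ := hE (r ≫ s)
  · right
    rw [IsZero.iff_id_eq_zero]
    simpa [reassoc_of% hsr, hsr] using s ≫= h =≫ r
  · left
    have : Mono r := mono_of_mono r s
    have : IsSplitEpi r := ⟨⟨⟨s, hsr⟩⟩⟩
    exact isIso_of_mono_of_isSplitEpi r

end EndDichotomy

end EndDichotomy

open scoped ZeroObject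

section Shift

variable {D : Type*} [Category D] [Preadditive D] [HasShift D ℤ]

lemma hom_shift_eq_zero_of_forall {X Y : D} {m n : ℤ} (hmn : m + n = 0)
    (h : ∀ g : X ⟶ Y⟦n⟧, g = 0) (f : X⟦m⟧ ⟶ Y) : f = 0 :=
  ((shiftEquiv' D m n hmn).toAdjunction.homEquiv X Y).injective ((h _).trans (h _).symm)

end Shift

section Stability

variable {D : Type*} [Category D] [HasZeroObject D] [Preadditive D] [HasShift D ℤ]
  [∀ n : ℤ, (shiftFunctor D n).Additive] [Pretriangulated D]
  {B : Set D} {σ : StabilityConditionOn B}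

namespace StabilityConditionOn

lemma mem_of_iso {φ : ℝ} {X Y : D} (hX : X ∈ σ.P φ) (e : X ≅ Y) : Y ∈ σ.P φ :=
  σ.P_iso φ X Y hX ⟨e⟩

lemma shift_one_mem_iff {φ : ℝ} {X : D} : X⟦(1 : ℤ)⟧ ∈ σ.P (φ + 1) ↔ X ∈ σ.P φ := by
  rw [σ.s3]
  constructor
  · rintro ⟨Y, hY, ⟨e⟩⟩
    exact mem_of_iso hY ((shiftFunctor D (1 : ℤ)).preimageIso e).symm
  · exact fun hX ↦ ⟨X, hX, ⟨Iso.refl _⟩⟩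

lemma shift_mem {φ : ℝ} {X : D} (hX : X ∈ σ.P φ) (n : ℤ) : X⟦n⟧ ∈ σ.P (φ + n) := by
  induction n using Int.induction_on with
  | zero =>
    rw [Int.cast_zero, add_zero]
    exact mem_of_iso hX ((shiftFunctorZero D ℤ).app X).symm
  | succ n ih =>
    rw [Int.cast_add, Int.cast_one, ← add_assoc]
    exact mem_of_iso (shift_one_mem_iff.2 ih) ((shiftFunctorAdd D (n : ℤ) 1).app X).symm
  | pred n ih =>
    rw [← shift_one_mem_iff, Int.cast_sub, Int.cast_one, add_assoc, sub_add_cancel]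
    exact mem_of_iso ih ((shiftFunctorAdd' D (-n - 1 : ℤ) 1 (-n) (by lia)).app X)

lemma hom_shift_eq_zero_of_neg {φ : ℝ} {X Y : D} (hX : X ∈ σ.P φ) (hY : Y ∈ σ.P φ) {n : ℤ}
    (hn : n < 0) (f : X ⟶ Y⟦n⟧) : f = 0 :=
  σ.s2 _ _ (add_lt_of_neg_right φ (Int.cast_lt_zero.2 hn)) X hX _ (shift_mem hY n) f

lemma isZero_of_mem_of_Z_eq_zero {φ : ℝ} {X : D} (hX : X ∈ σ.P φ) (hZ : σ.Z X = 0) :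
    IsZero X := by
  by_contra hX₀
  obtain ⟨m, hm, hZm⟩ := σ.s1 φ X hX hX₀
  exact mul_ne_zero (Complex.ofReal_ne_zero.2 hm.ne') (Complex.exp_ne_zero _) (hZm ▸ hZ)

lemma Z_eq_zero_of_isZero {X : D} (hX : IsZero X) : σ.Z X = 0 := by
  have hT : Triangle.mk (𝟙 X) (0 : X ⟶ X) 0 ∈ distTriang D :=
    isomorphic_distinguished _ (contractible_distinguished X) _
      (Triangle.isoMk _ _ (Iso.refl X) (Iso.refl X) (hX.iso (isZero_zero D)) rfl
        (hX.eq_of_src _ _) (hX.eq_of_src _ _))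
  have hB : X ∈ B := σ.P_le 0 (σ.P_zero 0 X hX)
  exact left_eq_add.1 (σ.Z_add _ hT hB hB hB)

/-- The signed distance of the central charge of `X` from the line spanned by `exp (iπφ)`. It is
additive on triangles, so that it can play the role of a rank function: it vanishes on `σ.P φ` and
`σ.P (φ + 1)` and is positive on the semistable objects with a phase strictly in between. -/
noncomputable def height (σ : StabilityConditionOn B) (φ : ℝ) (X : D) : ℝ :=
  (σ.Z X * Complex.exp (-(Real.pi * Complex.I * φ))).im

lemma exists_height_eq_mul_sin (φ : ℝ) {ψ : ℝ} {X : D} (hX : X ∈ σ.P ψ) (hX₀ : ¬ IsZero X) :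
    ∃ m : ℝ, 0 < m ∧ σ.height φ X = m * Real.sin (Real.pi * (ψ - φ)) := by
  obtain ⟨m, hm, hZ⟩ := σ.s1 ψ X hX hX₀
  have hexp : (Real.pi * Complex.I * ψ + -(Real.pi * Complex.I * φ) : ℂ) =
      (Real.pi * (ψ - φ) : ℝ) * Complex.I := by
    push_cast
    ring
  refine ⟨m, hm, ?_⟩
  rw [height, hZ, mul_assoc, ← Complex.exp_add, hexp, Complex.im_ofReal_mul,
    Complex.exp_ofReal_mul_I_im]

lemma height_pos {φ ψ : ℝ} {X : D} (hX : X ∈ σ.P ψ) (hX₀ : ¬ IsZero X) (hφψ : φ < ψ)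
    (hψφ : ψ < φ + 1) : 0 < σ.height φ X := by
  obtain ⟨m, hm, hmX⟩ := exists_height_eq_mul_sin φ hX hX₀
  rw [hmX]
  exact mul_pos hm (Real.sin_pos_of_pos_of_lt_pi (mul_pos Real.pi_pos (sub_pos.2 hφψ))
    (mul_lt_of_lt_one_right Real.pi_pos (sub_lt_iff_lt_add'.2 hψφ)))

lemma height_eq_zero {φ : ℝ} {X : D} (hX : X ∈ σ.P φ) : σ.height φ X = 0 := by
  by_cases hX₀ : IsZero X
  · rw [height, Z_eq_zero_of_isZero hX₀, zero_mul, Complex.zero_im]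
  obtain ⟨m, -, hmX⟩ := exists_height_eq_mul_sin φ hX hX₀
  rw [hmX, sub_self, mul_zero, Real.sin_zero, mul_zero]

lemma height_nonneg {φ ψ : ℝ} {X : D} (hX : X ∈ σ.P ψ) (hφψ : φ ≤ ψ) (hψφ : ψ ≤ φ + 1) :
    0 ≤ σ.height φ X := by
  by_cases hX₀ : IsZero X
  · rw [height, Z_eq_zero_of_isZero hX₀, zero_mul, Complex.zero_im]
  obtain ⟨m, hm, hmX⟩ := exists_height_eq_mul_sin φ hX hX₀
  rw [hmX]
  exact mul_nonneg hm.le (Real.sin_nonneg_of_nonneg_of_le_pi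
    (mul_nonneg Real.pi_pos.le (sub_nonneg.2 hφψ))
    (mul_le_of_le_one_right Real.pi_pos.le (sub_le_iff_le_add'.2 hψφ)))

lemma height_obj₂ (φ : ℝ) {T : Triangle D} (hT : T ∈ distTriang D) (h₁ : T.obj₁ ∈ B)
    (h₂ : T.obj₂ ∈ B) (h₃ : T.obj₃ ∈ B) :
    σ.height φ T.obj₂ = σ.height φ T.obj₁ + σ.height φ T.obj₃ := by
  rw [height, σ.Z_add T hT h₁ h₂ h₃, add_mul, Complex.add_im, height, height]

end StabilityConditionOn

/-- `HNFiltered P hi lo X`: the nonzero object `X` has a Harder–Narasimhan filtration with respect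
to the slicing `P` with first (largest) phase `hi` and last (smallest) phase `lo`. This inductive
form of `HasHNFiltration` keeps track of the two extreme phases only. -/
inductive HNFiltered (P : ℝ → Set D) (hi : ℝ) : ℝ → D → Prop
  | of_mem {X : D} (hX : X ∈ P hi) (hX₀ : ¬ IsZero X) : HNFiltered P hi hi X
  | extend {lo ψ : ℝ} {X Y A : D} {f : X ⟶ Y} {g : Y ⟶ A} {h : A ⟶ X⟦(1 : ℤ)⟧}
      (hX : HNFiltered P hi lo X) (hT : Triangle.mk f g h ∈ distTriang D)
      (hA : A ∈ P ψ) (hA₀ : ¬ IsZero A) (hψ : ψ < lo) : HNFiltered P hi ψ Y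

namespace HNFiltered

open StabilityConditionOn

variable {hi lo φ ψ : ℝ} {X Y W : D}

lemma of_iso (hX : HNFiltered σ.P hi lo X) (e : X ≅ Y) : HNFiltered σ.P hi lo Y := by
  cases hX with
  | of_mem hX hX₀ => exact .of_mem (mem_of_iso hX e) fun hY ↦ hX₀ (hY.of_iso e)
  | @extend _ _ X' _ A f g h hX' hT hA hA₀ hψ =>
    have comm₁ : (f ≫ e.hom) ≫ e.inv = 𝟙 X' ≫ f := by simp
    have comm₂ : (e.inv ≫ g) ≫ 𝟙 A = e.inv ≫ g := by simp
    have comm₃ : h ≫ (𝟙 X')⟦(1 : ℤ)⟧' = 𝟙 A ≫ h := by simp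
    have hT' : Triangle.mk (f ≫ e.hom) (e.inv ≫ g) h ∈ distTriang D :=
      isomorphic_distinguished _ hT _
        (Triangle.isoMk _ _ (Iso.refl X') e.symm (Iso.refl A) comm₁ comm₂ comm₃)
    exact .extend hX' hT' hA hA₀ hψ

lemma lo_le_hi {P : ℝ → Set D} (hX : HNFiltered P hi lo X) : lo ≤ hi := by
  induction hX with
  | of_mem => exact le_rfl
  | extend _ _ _ _ hψ ih => exact hψ.le.trans ih

lemma mem_of_hi_le_lo (hX : HNFiltered σ.P hi lo X) (h : hi ≤ lo) : X ∈ σ.P hi := by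
  cases hX with
  | of_mem hX _ => exact hX
  | extend hX' _ _ _ hψ => exact absurd (hψ.trans_le hX'.lo_le_hi) h.not_gt

lemma hom_eq_zero (hX : HNFiltered σ.P hi lo X) (hψ : ψ < lo) (hW : W ∈ σ.P ψ) (f : X ⟶ W) :
    f = 0 := by
  induction hX with
  | of_mem hX _ => exact σ.s2 _ _ hψ _ hX _ hW f
  | extend _ hT hA _ hlo ih =>
    obtain ⟨g, rfl⟩ := Triangle.yoneda_exact₂ _ hT f (ih (hψ.trans hlo) _)
    rw [σ.s2 _ _ hψ _ hA _ hW g]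
    exact comp_zero

lemma exists_hom_from_ne_zero (hX : HNFiltered σ.P hi lo X) :
    ∃ A ∈ σ.P hi, ∃ f : A ⟶ X, f ≠ 0 := by
  induction hX with
  | @of_mem X hX hX₀ => exact ⟨X, hX, 𝟙 X, mt (IsZero.iff_id_eq_zero X).2 hX₀⟩
  | @extend _ ψ _ _ _ u _ _ hX' hT hA _ hψ ih =>
    obtain ⟨A', hA', f, hf⟩ := ih
    refine ⟨A', hA', f ≫ u, fun hfu ↦ hf ?_⟩
    obtain ⟨g, rfl⟩ := Triangle.coyoneda_exact₂ _ (inv_rot_of_distTriang _ hT) f hfu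
    have hlt : ψ + (-1 : ℤ) < hi := by
      push_cast
      linarith [hX'.lo_le_hi]
    rw [σ.s2 _ _ hlt _ hA' _ (shift_mem hA (-1)) g]
    exact zero_comp

lemma exists_hom_to_ne_zero (hX : HNFiltered σ.P hi lo X) :
    ∃ A ∈ σ.P lo, ∃ f : X ⟶ A, f ≠ 0 := by
  cases hX with
  | of_mem hX hX₀ => exact ⟨X, hX, 𝟙 X, mt (IsZero.iff_id_eq_zero X).2 hX₀⟩
  | @extend _ _ X' _ A _ v _ hX' hT hA hA₀ hψ =>
    refine ⟨A, hA, v, fun hv ↦ hA₀ ((IsZero.iff_id_eq_zero A).2 ?_)⟩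
    obtain ⟨g, hg⟩ := Triangle.yoneda_exact₃ _ hT (𝟙 A) (by subst hv; exact zero_comp)
    have hg₀ : g = 0 := hom_shift_eq_zero_of_forall (add_neg_cancel 1)
      (hX'.hom_eq_zero (by push_cast; linarith) (shift_mem hA (-1))) g
    rw [hg, hg₀]
    exact comp_zero

lemma min_le_lo {T : Triangle D} (hT : T ∈ distTriang D) (h₂ : HNFiltered σ.P hi lo T.obj₂)
    (h₁ : T.obj₁ ∈ σ.P φ) (h₃ : T.obj₃ ∈ σ.P ψ) : min φ ψ ≤ lo := by
  by_contra! hlo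
  obtain ⟨A, hA, f, hf⟩ := h₂.exists_hom_to_ne_zero
  obtain ⟨g, rfl⟩ := Triangle.yoneda_exact₂ _ hT f
    (σ.s2 _ _ (lt_min_iff.1 hlo).1 _ h₁ _ hA _)
  exact hf (by rw [σ.s2 _ _ (lt_min_iff.1 hlo).2 _ h₃ _ hA g, comp_zero])

lemma hi_le_max {T : Triangle D} (hT : T ∈ distTriang D) (h₂ : HNFiltered σ.P hi lo T.obj₂)
    (h₁ : T.obj₁ ∈ σ.P φ) (h₃ : T.obj₃ ∈ σ.P ψ) : hi ≤ max φ ψ := by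
  by_contra! hhi
  obtain ⟨A, hA, f, hf⟩ := h₂.exists_hom_from_ne_zero
  obtain ⟨g, rfl⟩ := Triangle.coyoneda_exact₂ _ hT f
    (σ.s2 _ _ (max_lt_iff.1 hhi).2 _ hA _ h₃ _)
  exact hf (by rw [σ.s2 _ _ (max_lt_iff.1 hhi).1 _ hA _ h₁ g, zero_comp])

variable [ObjectProperty.IsTriangulatedClosed₂ (· ∈ B)]
  [ObjectProperty.IsClosedUnderIsomorphisms (· ∈ B)]

lemma mem (hX : HNFiltered σ.P hi lo X) : X ∈ B := by
  induction hX with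
  | of_mem hX _ => exact σ.P_le _ hX
  | extend _ hT hA _ _ ih =>
    exact ObjectProperty.ext_of_isTriangulatedClosed₂ (· ∈ B) _ hT ih (σ.P_le _ hA)

lemma height_extend {ψ : ℝ} {X Y A : D} {f : X ⟶ Y} {g : Y ⟶ A} {h : A ⟶ X⟦(1 : ℤ)⟧}
    (hX : HNFiltered σ.P hi lo X) (hT : Triangle.mk f g h ∈ distTriang D) (hA : A ∈ σ.P ψ) :
    σ.height φ Y = σ.height φ X + σ.height φ A :=
  height_obj₂ φ hT hX.mem (ObjectProperty.ext_of_isTriangulatedClosed₂ (· ∈ B) _ hT hX.mem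
    (σ.P_le _ hA)) (σ.P_le _ hA)

lemma height_nonneg (hX : HNFiltered σ.P hi lo X) (hlo : φ ≤ lo) (hhi : hi ≤ φ + 1) :
    0 ≤ σ.height φ X := by
  induction hX with
  | of_mem hX _ => exact StabilityConditionOn.height_nonneg hX hlo hhi
  | extend hX' hT hA _ hψ ih =>
    rw [height_extend hX' hT hA]
    exact add_nonneg (ih (hlo.trans hψ.le))
      (StabilityConditionOn.height_nonneg hA hlo (hψ.le.trans (hX'.lo_le_hi.trans hhi)))

lemma mem_of_height_eq_zero (hX : HNFiltered σ.P hi lo X) (hlo : φ < lo) (hhi : hi ≤ φ + 1)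
    (hX₀ : σ.height φ X = 0) : X ∈ σ.P (φ + 1) := by
  cases hX with
  | of_mem hX hX_ne =>
    obtain hlt | rfl := hhi.lt_or_eq
    · exact absurd hX₀ (height_pos hX hX_ne hlo hlt).ne'
    · exact hX
  | extend hX' hT hA hA₀ hψ =>
    have hA_pos := height_pos hA hA₀ hlo (hψ.trans_le (hX'.lo_le_hi.trans hhi))
    have hX'_nonneg := hX'.height_nonneg (hlo.trans hψ).le hhi
    rw [height_extend hX' hT hA] at hX₀
    linarith

lemma exists_distTriang_of_height_eq_zero (hX : HNFiltered σ.P hi lo X) (hlo : φ ≤ lo)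
    (hhi : hi ≤ φ + 1) (hX₀ : σ.height φ X = 0) :
    ∃ (K Q : D) (f : K ⟶ X) (g : X ⟶ Q) (h : Q ⟶ K⟦(1 : ℤ)⟧),
      Triangle.mk f g h ∈ distTriang D ∧ K ∈ σ.P (φ + 1) ∧ Q ∈ σ.P φ := by
  obtain hlt | rfl := hlo.lt_or_eq
  · exact ⟨X, 0, 𝟙 X, 0, 0, contractible_distinguished X,
      hX.mem_of_height_eq_zero hlt hhi hX₀, σ.P_zero φ 0 (isZero_zero D)⟩
  cases hX with
  | of_mem hX _ =>
    exact ⟨0, X, 0, 𝟙 X, 0, contractible_distinguished₁ X, σ.P_zero _ 0 (isZero_zero D), hX⟩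
  | @extend _ _ K _ Q f g h hK hT hQ hQ₀ hψ =>
    rw [height_extend hK hT hQ, height_eq_zero hQ, add_zero] at hX₀
    exact ⟨K, Q, f, g, h, hT, hK.mem_of_height_eq_zero hψ hhi hX₀, hQ⟩

end HNFiltered

namespace StabilityConditionOn

lemma exists_hnFiltered {E : D} (hE : E ∈ B) (hE₀ : ¬ IsZero E) :
    ∃ hi lo, HNFiltered σ.P hi lo E := by
  obtain ⟨n, X, f, φ, hX₀, ⟨e⟩, hφ, hX⟩ := σ.s4 E hE hE₀
  have hfiltered : ∀ i : Fin (n + 1), IsZero (X i) ∨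
      ∃ hi lo, HNFiltered σ.P hi lo (X i) ∧ ∀ j : Fin n, i ≤ j.castSucc → φ j < lo := by
    intro i
    induction i using Fin.induction with
    | zero => exact .inl hX₀
    | succ i ih =>
      obtain ⟨A, g, h, hT, hA₀, hA⟩ := hX i
      have hlt : ∀ j : Fin n, i.succ ≤ j.castSucc → φ j < φ i := fun j hij ↦
        hφ (Fin.succ_le_castSucc_iff.1 hij)
      obtain hXi | ⟨hi, lo, hXi, hlo⟩ := ih
      · have : IsIso g := (Triangle.isZero₁_iff_isIso₂ _ hT).1 hXi
        exact .inr ⟨_, _, (HNFiltered.of_mem hA hA₀).of_iso (asIso g).symm, hlt⟩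
      · exact .inr ⟨_, _, hXi.extend hT hA hA₀ (hlo i le_rfl), hlt⟩
  obtain hXn | ⟨hi, lo, hXn, -⟩ := hfiltered (Fin.last n)
  · exact absurd (hXn.of_iso e.symm) hE₀
  · exact ⟨hi, lo, hXn.of_iso e⟩

lemma mem_of_distTriang {φ a b : ℝ} (ha : φ ≤ a) (hb : b ≤ φ) {I X A Q Y : D} (hI : I ∈ B)
    {f : X ⟶ I} {g : I ⟶ A} {h : A ⟶ X⟦(1 : ℤ)⟧} (hT : Triangle.mk f g h ∈ distTriang D)
    (hX : X ∈ σ.P φ) (hA : A ∈ σ.P a)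
    {f' : Q ⟶ I} {g' : I ⟶ Y} {h' : Y ⟶ Q⟦(1 : ℤ)⟧} (hT' : Triangle.mk f' g' h' ∈ distTriang D)
    (hQ : Q ∈ σ.P b) (hY : Y ∈ σ.P φ) : I ∈ σ.P φ := by
  by_cases hI₀ : IsZero I
  · exact σ.P_zero φ I hI₀
  obtain ⟨hi, lo, hF⟩ := exists_hnFiltered hI hI₀
  have hlo : φ ≤ lo := (le_min le_rfl ha).trans (HNFiltered.min_le_lo hT hF hX hA)
  have hhi : hi ≤ φ := (HNFiltered.hi_le_max hT' hF hQ hY).trans (max_le hb le_rfl)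
  obtain rfl : hi = φ := hhi.antisymm (hlo.trans hF.lo_le_hi)
  exact hF.mem_of_hi_le_lo hlo

variable [ObjectProperty.IsTriangulatedClosed₂ (· ∈ B)]
  [ObjectProperty.IsTriangulatedClosed₃ (· ∈ B)]
  [ObjectProperty.IsClosedUnderIsomorphisms (· ∈ B)]

-- In the abelian category `σ.P φ`, `K⟦-1⟧` and `Q` are the kernel and the cokernel of `f`.
lemma exists_distTriang_cone {φ : ℝ} {X Y C : D} {f : X ⟶ Y} {g : Y ⟶ C} {h : C ⟶ X⟦(1 : ℤ)⟧}
    (hT : Triangle.mk f g h ∈ distTriang D) (hX : X ∈ σ.P φ) (hY : Y ∈ σ.P φ) :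
    ∃ (K Q : D) (i : K ⟶ C) (p : C ⟶ Q) (δ : Q ⟶ K⟦(1 : ℤ)⟧),
      Triangle.mk i p δ ∈ distTriang D ∧ K ∈ σ.P (φ + 1) ∧ Q ∈ σ.P φ := by
  have hCB : C ∈ B :=
    ObjectProperty.ext_of_isTriangulatedClosed₃ (· ∈ B) _ hT (σ.P_le _ hX) (σ.P_le _ hY)
  by_cases hC₀ : IsZero C
  · exact ⟨C, 0, 𝟙 C, 0, 0, contractible_distinguished C, σ.P_zero _ C hC₀,
      σ.P_zero φ 0 (isZero_zero D)⟩
  obtain ⟨hi, lo, hC⟩ := exists_hnFiltered hCB hC₀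
  have hXs : X⟦(1 : ℤ)⟧ ∈ σ.P (φ + 1) := shift_one_mem_iff.2 hX
  have hlo := HNFiltered.min_le_lo (rot_of_distTriang _ hT) hC hY hXs
  have hhi := HNFiltered.hi_le_max (rot_of_distTriang _ hT) hC hY hXs
  rw [min_eq_left (by linarith)] at hlo
  rw [max_eq_right (by linarith)] at hhi
  have hadd : σ.height φ Y = σ.height φ X + σ.height φ C :=
    height_obj₂ φ hT (σ.P_le _ hX) (σ.P_le _ hY) hCB
  rw [height_eq_zero hX, height_eq_zero hY, zero_add] at hadd
  exact hC.exists_distTriang_of_height_eq_zero hlo hhi hadd.symm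

lemma exists_image [IsTriangulated D] {φ : ℝ} {X Y C : D} {f : X ⟶ Y} {g : Y ⟶ C}
    {h : C ⟶ X⟦(1 : ℤ)⟧} (hT : Triangle.mk f g h ∈ distTriang D)
    (hX : X ∈ σ.P φ) (hY : Y ∈ σ.P φ) :
    ∃ (I Q : D) (e : X ⟶ I) (m : I ⟶ Y) (p : Y ⟶ Q) (δ : Q ⟶ I⟦(1 : ℤ)⟧),
      e ≫ m = f ∧ Triangle.mk m p δ ∈ distTriang D ∧ I ∈ σ.P φ ∧ Q ∈ σ.P φ ∧
        (IsZero Q → C ∈ σ.P (φ + 1)) := by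
  obtain ⟨K, Q, i, p, δ, hKCQ, hK, hQ⟩ := exists_distTriang_cone hT hX hY
  obtain ⟨I, m, δ', hIYQ⟩ := distinguished_cocone_triangle₁ (g ≫ p)
  let o := Triangulated.someOctahedron' rfl hT hKCQ hIYQ
  have hI : I ∈ B :=
    ObjectProperty.ext_of_isTriangulatedClosed₂ (· ∈ B) _ o.mem (σ.P_le _ hX) (σ.P_le _ hK)
  refine ⟨I, Q, o.m₁, m, g ≫ p, δ', o.comm₁, hIYQ, ?_, hQ, fun hQ₀ ↦ ?_⟩
  · exact mem_of_distTriang (by linarith) (by push_cast; linarith) hI o.mem hX hK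
      (inv_rot_of_distTriang _ hIYQ) (shift_mem hQ (-1)) hY
  · have : IsIso i := (Triangle.isZero₃_iff_isIso₁ _ hKCQ).1 hQ₀
    exact mem_of_iso hK (asIso i)

end StabilityConditionOn

namespace StabilityConditionOn.IsStable

lemma endDichotomy [IsTriangulated D] [ObjectProperty.IsTriangulatedClosed₂ (· ∈ B)]
    [ObjectProperty.IsTriangulatedClosed₃ (· ∈ B)]
    [ObjectProperty.IsClosedUnderIsomorphisms (· ∈ B)] {φ : ℝ} {E : D} (hE : σ.IsStable φ E) :
    EndDichotomy E := by
  intro f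
  obtain ⟨⟨hEφ, -⟩, hsimple⟩ := hE
  obtain ⟨C, g, h, hT⟩ := distinguished_cocone_triangle f
  obtain ⟨I, Q, e, m, p, δ, rfl, hIEQ, hI, hQ, hC⟩ := exists_image hT hEφ hEφ
  obtain hI₀ | hQ₀ := hsimple I Q m p δ hIEQ hI hQ
  · exact .inl (by rw [hI₀.eq_of_tgt e 0, zero_comp])
  · have hEB : E ∈ B := σ.P_le φ hEφ
    have hCB : C ∈ B := σ.P_le _ (hC hQ₀)
    have hZC : σ.Z C = 0 := left_eq_add.1 (σ.Z_add _ hT hEB hEB hCB)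
    exact .inr ((Triangle.isZero₃_iff_isIso₁ _ hT).1 (isZero_of_mem_of_Z_eq_zero (hC hQ₀) hZC))

lemma hom_shift_eq_zero {φ : ℝ} {E : D} (hE : σ.IsStable φ E) {n : ℤ} (hn : n < 0)
    (f : E ⟶ E⟦n⟧) : f = 0 :=
  hom_shift_eq_zero_of_neg hE.1.1 hE.1.1 hn f

end StabilityConditionOn.IsStable

end Stability

section ShiftOrthogonal

variable {D : Type*} [Category D] [Preadditive D] [HasShift D ℤ]

/-- `Hom^n(A, B) = 0` for all `n : ℤ`; all shifts of `B` are considered at once, so that the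
relation is stable under extensions and cones in either variable. -/
def ShiftOrthogonal (A B : D) : Prop := ∀ (n : ℤ) (f : A ⟶ B⟦n⟧), f = 0

lemma ShiftOrthogonal.shift_right {A B : D} (h : ShiftOrthogonal A B) (a : ℤ) :
    ShiftOrthogonal A (B⟦a⟧) := by
  intro n f
  rw [← cancel_mono ((shiftFunctorAdd D a n).app B).inv, zero_comp]
  exact h (a + n) _

variable [HasZeroObject D] [∀ n : ℤ, (shiftFunctor D n).Additive] [Pretriangulated D]

lemma exists_eq_comp_shift_mor₁ {T : Triangle D} (hT : T ∈ distTriang D) {A : D} {n : ℤ}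
    (x : A ⟶ (Triangle.obj₂ T)⟦n⟧) (hx : x ≫ T.mor₂⟦n⟧' = 0) :
    ∃ y : A ⟶ T.obj₁⟦n⟧, x = y ≫ T.mor₁⟦n⟧' := by
  obtain ⟨y, hy⟩ := Triangle.coyoneda_exact₂ _ (Triangle.shift_distinguished _ hT n) x <| by
    change x ≫ (n.negOnePow • T.mor₂⟦n⟧') = 0
    rw [Units.smul_def, Preadditive.comp_zsmul, hx, smul_zero]
  change A ⟶ T.obj₁⟦n⟧ at y
  change x = y ≫ (n.negOnePow • T.mor₁⟦n⟧') at hy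
  refine ⟨n.negOnePow • y, ?_⟩
  rw [hy, Units.smul_def, Units.smul_def, Preadditive.comp_zsmul, Preadditive.zsmul_comp]

namespace ShiftOrthogonal

lemma obj₂_right {A : D} {T : Triangle D} (hT : T ∈ distTriang D) (h₁ : ShiftOrthogonal A T.obj₁)
    (h₃ : ShiftOrthogonal A T.obj₃) : ShiftOrthogonal A (Triangle.obj₂ T) := by
  intro n f
  obtain ⟨g, rfl⟩ := exists_eq_comp_shift_mor₁ hT f (h₃ n _)
  rw [h₁ n g, zero_comp]

lemma obj₃_right {A : D} {T : Triangle D} (hT : T ∈ distTriang D) (h₁ : ShiftOrthogonal A T.obj₁)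
    (h₂ : ShiftOrthogonal A (Triangle.obj₂ T)) : ShiftOrthogonal A T.obj₃ :=
  obj₂_right (rot_of_distTriang _ hT) h₂ (h₁.shift_right 1)

lemma obj₂_left {B : D} {T : Triangle D} (hT : T ∈ distTriang D) (h₁ : ShiftOrthogonal T.obj₁ B)
    (h₃ : ShiftOrthogonal T.obj₃ B) : ShiftOrthogonal (Triangle.obj₂ T) B := by
  intro n f
  obtain ⟨g, rfl⟩ := Triangle.yoneda_exact₂ _ hT f (h₁ n _)
  rw [h₃ n g, comp_zero]

lemma exists_eq_mor₁_comp {B : D} {T : Triangle D} (hT : T ∈ distTriang D)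
    (h : ShiftOrthogonal T.obj₃ B) {n : ℤ} (f : T.obj₁ ⟶ B⟦n⟧) :
    ∃ g : Triangle.obj₂ T ⟶ B⟦n⟧, f = T.mor₁ ≫ g :=
  Triangle.yoneda_exact₂ _ (inv_rot_of_distTriang _ hT) f
    (hom_shift_eq_zero_of_forall (neg_add_cancel (1 : ℤ)) (h.shift_right n 1) _)

lemma exists_eq_comp_shift_mor₂ {A : D} {T : Triangle D} (hT : T ∈ distTriang D)
    (h : ShiftOrthogonal A T.obj₁) {n : ℤ} (f : A ⟶ T.obj₃⟦n⟧) :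
    ∃ g : A ⟶ (Triangle.obj₂ T)⟦n⟧, f = g ≫ T.mor₂⟦n⟧' :=
  exists_eq_comp_shift_mor₁ (rot_of_distTriang _ hT) f (h.shift_right 1 n _)

end ShiftOrthogonal

end ShiftOrthogonal

section Truncation

open CategoryTheory.Triangulated

variable {D : Type*} [Category D] [HasZeroObject D] [Preadditive D] [HasShift D ℤ]
  [∀ n : ℤ, (shiftFunctor D n).Additive] [Pretriangulated D] (t : TStructure D)

lemma eq_zero_of_truncGEπ_comp_eq_zero {X Y : D} {m n : ℤ} (hmn : m ≤ n + 1) [t.IsGE Y n]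
    {f : (t.truncGE m).obj X ⟶ Y} (hf : (t.truncGEπ m).app X ≫ f = 0) : f = 0 := by
  obtain ⟨g, rfl⟩ := Triangle.yoneda_exact₃ _ (t.triangleLTGE_distinguished m X) f hf
  have : t.IsLE (((t.truncLT m).obj X)⟦(1 : ℤ)⟧) (m - 2) := t.isLE_shift _ (m - 1) 1 (m - 2)
  have hg : g = 0 := t.zero_of_isLE_of_isGE g (m - 2) n (by lia) this inferInstance
  rw [hg]
  exact comp_zero

lemma exists_distTriang_truncGELT [IsTriangulated D] {a b : ℤ} (hab : a ≤ b) (X : D) :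
    ∃ δ, Triangle.mk ((t.truncGE a).map ((t.truncLTι b).app X))
      ((t.natTransTruncGEOfLE a b hab).app X) δ ∈ distTriang D := by
  let o := Triangulated.someOctahedron (t.natTransTruncLTOfLE_ι_app a b hab X)
    (t.triangleLTLTGELT_distinguished a b hab X) (t.triangleLTGE_distinguished b X)
    (t.triangleLTGE_distinguished a X)
  have h₁ : o.m₁ = (t.truncGE a).map ((t.truncLTι b).app X) :=
    t.from_truncGE_obj_ext (o.comm₁.trans (t.truncGEπ_naturality a _).symm)
  have : t.IsGE ((t.truncGE b).obj X) a := t.isGE_of_ge _ a b hab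
  have h₃ : o.m₃ = (t.natTransTruncGEOfLE a b hab).app X :=
    t.from_truncGE_obj_ext (o.comm₃.trans (t.π_natTransTruncGEOfLE_app a b hab X).symm)
  exact ⟨_, h₁ ▸ h₃ ▸ o.mem⟩

lemma eq_zero_of_comp_truncGE_map_truncLTι_eq_zero [IsTriangulated D] {W X : D} {a b c n : ℤ}
    (hab : a ≤ b) (hc : c + n < b + 1) [t.IsLE W c] {f : W ⟶ ((t.truncGELT a b).obj X)⟦n⟧}
    (hf : f ≫ ((t.truncGE a).map ((t.truncLTι b).app X))⟦n⟧' = 0) : f = 0 := by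
  obtain ⟨δ, hT⟩ := exists_distTriang_truncGELT t hab X
  obtain ⟨g, rfl⟩ := exists_eq_comp_shift_mor₁ (inv_rot_of_distTriang _ hT) f hf
  have h₁ : t.IsGE (((t.truncGE b).obj X)⟦(-1 : ℤ)⟧) (b + 1) := t.isGE_shift _ b (-1) (b + 1)
  have h₂ : t.IsGE (((t.truncGE b).obj X)⟦(-1 : ℤ)⟧⟦n⟧) (b + 1 - n) :=
    t.isGE_shift _ (b + 1) n (b + 1 - n)
  have hg : g = 0 := t.zero_of_isLE_of_isGE g c (b + 1 - n) (by lia) inferInstance h₂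
  rw [hg]
  exact zero_comp

lemma EndDichotomy.mor₂_comp_mor₁_eq_zero {T : Triangle D} (hT : T ∈ distTriang D)
    (hE : EndDichotomy (Triangle.obj₂ T)) (f : T.obj₃ ⟶ T.obj₁) : T.mor₂ ≫ f ≫ T.mor₁ = 0 := by
  refine hE.eq_zero_of_comp_self ?_
  simp only [Category.assoc, comp_distTriang_mor_zero₁₂_assoc T hT, zero_comp, comp_zero]

variable {t} {E : D}

lemma truncGEπ_comp_truncLTι_eq_zero (hE : EndDichotomy E)
    (hneg : ∀ n : ℤ, n < 0 → ∀ f : E ⟶ E⟦n⟧, f = 0) {i j n : ℤ} (hij : i ≤ j) (hn : n ≤ i - j)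
    (β : (t.truncGE j).obj E ⟶ ((t.truncLT i).obj E)⟦n⟧) :
    (t.truncGEπ j).app E ≫ β ≫ ((t.truncLTι i).app E)⟦n⟧' = 0 := by
  obtain hn₀ | rfl : n < 0 ∨ n = 0 := by lia
  · exact hneg n hn₀ _
  · obtain rfl : i = j := by lia
    have hcomm : ((t.truncLTι i).app E)⟦(0 : ℤ)⟧' ≫ (shiftFunctorZero D ℤ).hom.app E =
        (shiftFunctorZero D ℤ).hom.app ((t.truncLT i).obj E) ≫ (t.truncLTι i).app E :=
      (shiftFunctorZero D ℤ).hom.naturality _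
    rw [← cancel_mono ((shiftFunctorZero D ℤ).hom.app E), zero_comp, Category.assoc,
      Category.assoc, hcomm, ← Category.assoc β]
    exact EndDichotomy.mor₂_comp_mor₁_eq_zero (t.triangleLTGE_distinguished i E) hE _

lemma EndDichotomy.isLE_or_isGE (hE : EndDichotomy E) {m : ℤ}
    (hm : ∀ f : (t.truncGE m).obj E ⟶ ((t.truncLT m).obj E)⟦(1 : ℤ)⟧, f = 0) :
    t.IsLE E (m - 1) ∨ t.IsGE E m := by
  obtain ⟨s, hs⟩ : ∃ s : (t.truncGE m).obj E ⟶ E, 𝟙 _ = s ≫ (t.truncGEπ m).app E :=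
    Triangle.coyoneda_exact₃ _ (t.triangleLTGE_distinguished m E) (𝟙 _) (hm _)
  rw [t.isLE_iff_isZero_truncGE_obj (m - 1) m (by lia), t.isGE_iff_isIso_truncGEπ_app]
  exact (hE.isIso_or_isZero hs.symm).symm

lemma exists_isGE_isLE_of_forall (h : ∀ m, t.IsLE E (m - 1) ∨ t.IsGE E m) {a b : ℤ}
    [t.IsGE E a] [t.IsLE E b] : ∃ m, t.IsGE E m ∧ t.IsLE E m := by
  obtain ⟨k, hk⟩ : ∃ k : ℕ, b ≤ a + k := ⟨(b - a).toNat, by lia⟩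
  induction k generalizing a with
  | zero => exact ⟨a, inferInstance, t.isLE_of_le E b a (by lia)⟩
  | succ k ih =>
    obtain hle | hge := h (a + 1)
    · exact ⟨a, inferInstance, t.isLE_of_le E (a + 1 - 1) a (by lia)⟩
    · exact ih (a := a + 1) (by lia)

variable [IsTriangulated D]

lemma hom_truncGELT_eq_zero (hE : EndDichotomy E)
    (hneg : ∀ n : ℤ, n < 0 → ∀ f : E ⟶ E⟦n⟧, f = 0) {i j n : ℤ} (hij : i < j)
    (hn : n ≤ i - j + 1)
    (h₁ : ShiftOrthogonal ((t.truncGE (j + 1)).obj E) ((t.truncGELT i (i + 1)).obj E))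
    (h₂ : ShiftOrthogonal ((t.truncGE j).obj E) ((t.truncLT i).obj E))
    (α : (t.truncGELT j (j + 1)).obj E ⟶ ((t.truncGELT i (i + 1)).obj E)⟦n⟧) : α = 0 := by
  obtain ⟨δ, hT⟩ := exists_distTriang_truncGELT t (show j ≤ j + 1 by lia) E
  obtain ⟨α', hα⟩ : ∃ α' : (t.truncGE j).obj E ⟶ ((t.truncGELT i (i + 1)).obj E)⟦n⟧,
    α = (t.truncGE j).map ((t.truncLTι (j + 1)).app E) ≫ α' := h₁.exists_eq_mor₁_comp hT α
  obtain ⟨β, hβ⟩ : ∃ β : (t.truncGE j).obj E ⟶ ((t.truncLT (i + 1)).obj E)⟦n⟧,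
    α' = β ≫ ((t.truncGEπ i).app ((t.truncLT (i + 1)).obj E))⟦n⟧' :=
    h₂.exists_eq_comp_shift_mor₂ (t.triangleLTLTGELT_distinguished i (i + 1) (by lia) E) α'
  have hα' : α' ≫ ((t.truncGE i).map ((t.truncLTι (i + 1)).app E))⟦n⟧' = 0 := by
    have hcomm : (t.truncGEπ i).app ((t.truncLT (i + 1)).obj E) ≫
        (t.truncGE i).map ((t.truncLTι (i + 1)).app E) =
          (t.truncLTι (i + 1)).app E ≫ (t.truncGEπ i).app E := t.truncGEπ_naturality i _
    have : t.IsGE (((t.truncGE i).obj E)⟦n⟧) (i - n) := t.isGE_shift _ i n (i - n)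
    refine eq_zero_of_truncGEπ_comp_eq_zero t (Y := ((t.truncGE i).obj E)⟦n⟧) (n := i - n)
      (by lia) ?_
    rw [hβ, Category.assoc, ← Functor.map_comp, hcomm, Functor.map_comp]
    simpa only [Category.assoc, zero_comp] using
      truncGEπ_comp_truncLTι_eq_zero hE hneg (by lia) (by lia) β =≫ ((t.truncGEπ i).app E)⟦n⟧'
  have : t.IsLE ((t.truncGELT j (j + 1)).obj E) j := t.isLE_of_le _ (j + 1 - 1) j (by lia)
  refine eq_zero_of_comp_truncGE_map_truncLTι_eq_zero t (c := j) (by lia) (by lia) ?_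
  rw [hα, Category.assoc, hα', comp_zero]

lemma shiftOrthogonal_truncGE_truncLT (hE : EndDichotomy E)
    (hneg : ∀ n : ℤ, n < 0 → ∀ f : E ⟶ E⟦n⟧, f = 0)
    (hX : ∀ i j : ℤ, (∀ n ≤ i - j + 1, ∀ α : (t.truncGELT j (j + 1)).obj E ⟶
      ((t.truncGELT i (i + 1)).obj E)⟦n⟧, α = 0) →
      ShiftOrthogonal ((t.truncGELT j (j + 1)).obj E) ((t.truncGELT i (i + 1)).obj E))
    {a b : ℤ} [t.IsGE E a] [t.IsLE E b] (i j : ℤ) (hij : i ≤ j) :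
    ShiftOrthogonal ((t.truncGE j).obj E) ((t.truncLT i).obj E) := by
  obtain ⟨N, hN⟩ : ∃ N : ℕ, b - a - (j - i) ≤ N := ⟨(b - a - (j - i)).toNat, by lia⟩
  induction N generalizing i j with
  | zero =>
    intro n f
    by_cases hj : b < j
    · have := t.isLE_of_le E b (j - 1) (by lia)
      exact (t.isZero_truncGE_obj_of_isLE (j - 1) j (by lia) E).eq_of_src _ _
    · have := t.isGE_of_ge E i a (by lia)
      exact ((shiftFunctor D n).map_isZero (t.isZero_truncLT_obj_of_isGE i E)).eq_of_tgt _ _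
  | succ N ih =>
    obtain ⟨i, rfl⟩ : ∃ i', i = i' + 1 := ⟨i - 1, by lia⟩
    obtain ⟨δ, hT⟩ := exists_distTriang_truncGELT t (show j ≤ j + 1 by lia) E
    have hTi := t.triangleLTLTGELT_distinguished i (i + 1) (by lia) E
    have hL : ShiftOrthogonal ((t.truncGE j).obj E) ((t.truncLT i).obj E) :=
      ih i j (by lia) (by lia)
    have hG : ShiftOrthogonal ((t.truncGE (j + 1)).obj E) ((t.truncGELT i (i + 1)).obj E) :=
      (ShiftOrthogonal.obj₃_right hTi (ih i (j + 1) (by lia) (by lia))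
        (ih (i + 1) (j + 1) (by lia) (by lia)) :)
    have hX' := hX i j fun n hn ↦ hom_truncGELT_eq_zero hE hneg (by lia) hn hG hL
    exact .obj₂_right hTi hL (.obj₂_left hT hX' hG)

theorem exists_isGE_isLE (hE : EndDichotomy E)
    (hneg : ∀ n : ℤ, n < 0 → ∀ f : E ⟶ E⟦n⟧, f = 0)
    (hX : ∀ i j : ℤ, (∀ n ≤ i - j + 1, ∀ α : (t.truncGELT j (j + 1)).obj E ⟶
      ((t.truncGELT i (i + 1)).obj E)⟦n⟧, α = 0) →
      ShiftOrthogonal ((t.truncGELT j (j + 1)).obj E) ((t.truncGELT i (i + 1)).obj E))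
    {a b : ℤ} [t.IsGE E a] [t.IsLE E b] : ∃ m, t.IsGE E m ∧ t.IsLE E m :=
  exists_isGE_isLE_of_forall (a := a) (b := b) fun m ↦ hE.isLE_or_isGE
    (shiftOrthogonal_truncGE_truncLT hE hneg hX (a := a) (b := b) m m le_rfl 1)

end Truncation

section Linear

variable {R : Type*} [Semiring R] {C C' : Type*} [Category C] [Preadditive C] [Linear R C]
  [Category C'] [Preadditive C'] [Linear R C'] {X Y : C} {a : R}

lemma smul_id_obj_eq_zero (F : C ⥤ C') [F.PreservesZeroMorphisms] [F.Linear R]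
    (h : a • 𝟙 X = 0) : a • 𝟙 (F.obj X) = 0 := by
  rw [← F.map_id, ← F.map_smul, h, F.map_zero]

lemma smul_id_eq_zero_of_faithful (F : C ⥤ C') [F.PreservesZeroMorphisms] [F.Linear R]
    [F.Faithful] (h : a • 𝟙 (F.obj X) = 0) : a • 𝟙 X = 0 :=
  F.map_injective (by rw [F.map_smul, F.map_id, h, F.map_zero])

lemma smul_id_eq_zero_of_iso (e : X ≅ Y) (h : a • 𝟙 X = 0) : a • 𝟙 Y = 0 := by
  simpa using e.inv ≫= h =≫ e.hom

end Linear

section TruncationLinear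

open CategoryTheory.Triangulated

variable {D : Type*} [Category D] [HasZeroObject D] [Preadditive D] [HasShift D ℤ]
  [∀ n : ℤ, (shiftFunctor D n).Additive] [Pretriangulated D] (t : TStructure D)
  (R : Type*) [Semiring R] [Linear R D] (n : ℤ)

instance : (t.truncGE n).Linear R where
  map_smul f a := t.from_truncGE_obj_ext <| by
    rw [Linear.comp_smul, t.truncGEπ_naturality, t.truncGEπ_naturality, Linear.smul_comp]

instance : (t.truncLT n).Linear R where
  map_smul f a := t.to_truncLT_obj_ext <| by
    simp only [Linear.smul_comp, NatTrans.naturality, Functor.id_map]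
    exact Linear.comp_smul ..

end TruncationLinear

section HomVanishing

lemma forall_hom_eq_zero_congr {C : Type*} [Category C] [HasZeroMorphisms C] {X X' Y Y' : C}
    (e : X ≅ X') (e' : Y ≅ Y') : (∀ f : X ⟶ Y, f = 0) ↔ ∀ f : X' ⟶ Y', f = 0 := by
  simpa only [subsingleton_iff_forall_eq (0 : _ ⟶ _)] using
    (e.homCongr e').subsingleton_congr

variable {D : Type*} [Category D] [Preadditive D] [HasShift D ℤ]

lemma forall_hom_shift_eq_zero_iff {X Y A B : D} {s r p q : ℤ} (eX : X ≅ A⟦s⟧) (eY : Y ≅ B⟦r⟧)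
    (hpq : r + p = q + s) : (∀ f : X ⟶ Y⟦p⟧, f = 0) ↔ ∀ f : A ⟶ B⟦q⟧, f = 0 := by
  let e : Y⟦p⟧ ≅ B⟦q⟧⟦s⟧ := (shiftFunctor D p).mapIso eY ≪≫
    ((shiftFunctorAdd' D r p (q + s) hpq).app B).symm ≪≫ (shiftFunctorAdd' D q s _ rfl).app B
  rw [forall_hom_eq_zero_congr eX e, ← subsingleton_iff_forall_eq, ← subsingleton_iff_forall_eq]
  exact (Functor.FullyFaithful.ofFullyFaithful (shiftFunctor D s)).homEquiv.symm.subsingleton_congr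

end HomVanishing

section DerivedCategory

variable {𝒜 : Type u} [Category.{v} 𝒜] [Abelian 𝒜] [HasDerivedCategory.{w} 𝒜]

lemma mem_isBoundedComplex_eq_bounded :
    (· ∈ {E : DerivedCategory 𝒜 | IsBoundedComplex 𝒜 E}) = TStructure.t.bounded := by
  ext E
  constructor
  · rintro ⟨a, b, h⟩
    exact ⟨⟨a, (isGE_iff E a).2 fun i hi ↦ h i (.inl hi)⟩,
      ⟨b, (isLE_iff E b).2 fun i hi ↦ h i (.inr hi)⟩⟩
  · rintro ⟨⟨a, ha⟩, ⟨b, hb⟩⟩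
    exact ⟨a, b, fun i hi ↦ hi.elim ((isGE_iff E a).1 ha i) ((isLE_iff E b).1 hb i)⟩

instance : ObjectProperty.IsClosedUnderIsomorphisms
    (· ∈ {E : DerivedCategory 𝒜 | IsBoundedComplex 𝒜 E}) := by
  rw [mem_isBoundedComplex_eq_bounded]
  infer_instance

instance : ObjectProperty.IsTriangulated
    (· ∈ {E : DerivedCategory 𝒜 | IsBoundedComplex 𝒜 E}) := by
  rw [mem_isBoundedComplex_eq_bounded]
  infer_instance

lemma exists_iso_degZero_shift (X : DerivedCategory 𝒜) (n : ℤ) [X.IsGE n] [X.IsLE n] :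
    ∃ A : 𝒜, Nonempty (X ≅ (degZero 𝒜 A)⟦-n⟧) := by
  obtain ⟨A, ⟨e⟩⟩ := exists_iso_singleFunctor_obj_of_isGE_of_isLE X n
  exact ⟨A, ⟨e ≪≫ (((singleFunctors 𝒜).shiftIso (-n) n 0 (by lia)).app A).symm⟩⟩

lemma AlmostHereditary.shiftOrthogonal {A₀ : Set 𝒜} (h : AlmostHereditary 𝒜 A₀) {A B : 𝒜}
    (hA : A ∈ A₀) (hB : B ∈ A₀) {X Y : DerivedCategory 𝒜} {i j : ℤ}
    (eX : X ≅ (degZero 𝒜 A)⟦-j⟧) (eY : Y ≅ (degZero 𝒜 B)⟦-i⟧)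
    (h₀ : ∀ f : X ⟶ Y⟦i - j⟧, f = 0) (h₁ : ∀ f : X ⟶ Y⟦i - j + 1⟧, f = 0) :
    ShiftOrthogonal X Y := by
  have hAB := h A B hA hB
    ((forall_hom_eq_zero_congr (Iso.refl _) ((shiftFunctorZero _ ℤ).app _)).1
      ((forall_hom_shift_eq_zero_iff eX eY (by lia)).1 h₀))
    ((forall_hom_shift_eq_zero_iff eX eY (by lia)).1 h₁)
  exact fun n ↦ (forall_hom_shift_eq_zero_iff eX eY (q := n - i + j) (by lia)).2 (hAB _)

end DerivedCategory

section Annihilated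

variable (𝒜 : Type u) [Category.{v} 𝒜]

/-- The objects of `𝒜` annihilated by the ideal `I`; the maximal ideal `𝔪` gives `𝒜_𝔪`. -/
def annihilatedObjects [Preadditive 𝒜] {R : Type*} [Semiring R] [Linear R 𝒜] (I : Ideal R) :
    Set 𝒜 :=
  {A | ∀ a ∈ I, a • 𝟙 A = 0}

variable {𝒜} [Abelian 𝒜] [HasDerivedCategory.{w} 𝒜]

lemma exists_mem_annihilatedObjects {R : Type*} [Ring R] [Linear R 𝒜] {I : Ideal R}
    {X : DerivedCategory 𝒜} (hX : ∀ a ∈ I, a • 𝟙 X = 0) (n : ℤ) [X.IsGE n] [X.IsLE n] :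
    ∃ A ∈ annihilatedObjects 𝒜 I, Nonempty (X ≅ (degZero 𝒜 A)⟦-n⟧) := by
  obtain ⟨A, ⟨e⟩⟩ := exists_iso_degZero_shift X n
  exact ⟨A, fun a ha ↦ smul_id_eq_zero_of_faithful (singleFunctor 𝒜 0 ⋙ shiftFunctor _ (-n))
    (smul_id_eq_zero_of_iso e (hX a ha)), ⟨e⟩⟩

theorem stmt5_general {R : Type*} [CommRing R] [Linear R 𝒜] (I : Ideal R) (hI : I ≤ nilradical R)
    (hAH : AlmostHereditary 𝒜 (annihilatedObjects 𝒜 I))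
    (σ : StabilityConditionOn {E : DerivedCategory 𝒜 | IsBoundedComplex 𝒜 E})
    (E : DerivedCategory 𝒜) (φ : ℝ) (hE : σ.IsStable φ E) :
    (∀ (X Y : DerivedCategory 𝒜) (b : BinaryBicone X Y), b.IsBilimit →
      Nonempty (E ≅ b.pt) → IsZero X ∨ IsZero Y) ∧
    (∃ A ∈ annihilatedObjects 𝒜 I, ∃ m : ℤ, Nonempty (E ≅ (degZero 𝒜 A)⟦m⟧)) := by
  have hEnd : EndDichotomy E := hE.endDichotomy
  refine ⟨fun X Y b _ ⟨e⟩ ↦ hEnd.isZero_or_isZero b e, ?_⟩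
  have hann : ∀ a ∈ I, a • 𝟙 E = 0 := fun a ha ↦ hEnd.smul_id_eq_zero (hI ha)
  have hcoh (j : ℤ) : ∃ A ∈ annihilatedObjects 𝒜 I,
      Nonempty ((TStructure.t.truncGELT j (j + 1)).obj E ≅ (degZero 𝒜 A)⟦-j⟧) := by
    have := TStructure.t.isLE_of_le ((TStructure.t.truncGELT j (j + 1)).obj E) (j + 1 - 1) j
    exact exists_mem_annihilatedObjects (fun a ha ↦ smul_id_obj_eq_zero _ (hann a ha)) j
  obtain ⟨⟨a, _⟩, ⟨b, _⟩⟩ : TStructure.t.bounded E :=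
    mem_isBoundedComplex_eq_bounded (𝒜 := 𝒜) ▸ σ.P_le φ hE.1.1
  obtain ⟨m, _, _⟩ := exists_isGE_isLE (t := TStructure.t) hEnd (fun _ ↦ hE.hom_shift_eq_zero)
    (fun i j h ↦ by
      obtain ⟨A, hA, ⟨eA⟩⟩ := hcoh j
      obtain ⟨B, hB, ⟨eB⟩⟩ := hcoh i
      exact hAH.shiftOrthogonal hA hB eA eB (h _ (by lia)) (h _ le_rfl)) (a := a) (b := b)
  obtain ⟨A, hA, e⟩ := exists_mem_annihilatedObjects hann m
  exact ⟨A, hA, -m, e⟩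

end Annihilated

theorem stmt5 (R : Type*) [CommRing R] [IsArtinianRing R] [IsLocalRing R]
    {𝒜 : Type u} [Category.{v} 𝒜] [Abelian 𝒜] [CategoryTheory.Linear R 𝒜]
    [HasDerivedCategory.{w} 𝒜]
    -- the full subcategory `𝒜_𝔪` of objects annihilated by the maximal ideal `𝔪`
    (A𝔪 : Set 𝒜)
    (hA𝔪 : A𝔪 = {A : 𝒜 | ∀ a ∈ IsLocalRing.maximalIdeal R, a • (𝟙 A) = 0})
    -- `𝒜_𝔪` is almost hereditary in `𝒜`
    (hAH : AlmostHereditary 𝒜 A𝔪)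
    -- `σ` is a stability condition on `D^b(𝒜)`
    (σ : StabilityConditionOn {E : DerivedCategory 𝒜 | IsBoundedComplex 𝒜 E})
    -- `E` is a `σ`-stable object
    (E : DerivedCategory 𝒜) (φ : ℝ) (hE : σ.IsStable φ E) :
    -- `E` is indecomposable …
    (∀ (X Y : DerivedCategory 𝒜) (b : BinaryBicone X Y), b.IsBilimit →
      Nonempty (E ≅ b.pt) → IsZero X ∨ IsZero Y) ∧
    -- … and `E` is, up to shift, an object of `𝒜_𝔪`
    (∃ A ∈ A𝔪, ∃ m : ℤ, Nonempty (E ≅ (degZero 𝒜 A)⟦m⟧)) := by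
  subst hA𝔪
  exact stmt5_general _ (fun _ ↦ Ring.KrullDimLE.isNilpotent_iff_mem_maximalIdeal.2) hAH σ E φ hE
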